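/- arXiv:1508.05515 — 2 statements merged into one kernel-verified Lean document; each statement's English description precedes it below -/
import Mathlib

section
/- Every 2-connected unit disk graph G has a 2-connected spanning subgraph F in which every vertex has degree at most 5. -/
open scoped Classical
open EuclideanGeometry Real

noncomputable section

/-- Points in the Euclidean plane. -/
abbrev Pt := EuclideanSpace ℝ (Fin 2)

/-- A graph is `k`-connected if it has more than `k` vertices and remains connected
after deleting any fewer than `k` vertices. -/
def KConnected {V : Type*} [Fintype V] (k : ℕ) (G : SimpleGraph V) : Prop :=
  k < Fintype.card V ∧ ∀ S : Finset V, S.card < k → (G.induce {v : V | v ∉ S}).Connected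

/-- `G` is a unit disk graph realized by the (injective) point placement `p`:
two distinct vertices are adjacent iff their Euclidean distance is at most 1. -/
def IsUnitDiskGraph {V : Type*} (G : SimpleGraph V) (p : V → Pt) : Prop :=
  Function.Injective p ∧ ∀ u v, G.Adj u v ↔ u ≠ v ∧ dist (p u) (p v) ≤ 1

/-- Euclidean length of an edge. -/
def edgeLen {V : Type*} (p : V → Pt) : Sym2 V → ℝ :=
  Sym2.lift ⟨fun a b => dist (p a) (p b), fun a b => dist_comm (p a) (p b)⟩

/-- Total Euclidean edge length of a graph. -/
def glen {V : Type*} [Fintype V] (p : V → Pt) (G : SimpleGraph V) : ℝ :=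
  ∑ e ∈ G.edgeFinset, edgeLen p e

/-- `F` is a minimum-length `k`-connected spanning subgraph (`k`-MSS) of `G`. -/
def IsMSS {V : Type*} [Fintype V] (k : ℕ) (p : V → Pt) (G F : SimpleGraph V) : Prop :=
  F ≤ G ∧ KConnected k F ∧
    ∀ F' : SimpleGraph V, F' ≤ G → KConnected k F' → glen p F ≤ glen p F'

/-- Two nonzero complex numbers at angle less than `π/3`. -/
lemma two_point {z z' : ℂ} (hz : z ≠ 0) (hz' : z' ≠ 0) (h : |z.arg - z'.arg| < π / 3) :
    ‖z - z'‖ < ‖z‖ ∨ ‖z - z'‖ < ‖z'‖ := by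
  have hc : (1 / 2 : ℝ) < Real.cos (z.arg - z'.arg) := by
    rw [← Real.cos_abs, ← Real.cos_pi_div_three]
    apply Real.cos_lt_cos_of_nonneg_of_le_pi_div_two (abs_nonneg _) _ h
    linarith [Real.pi_pos]
  have h0 : 0 < ‖z‖ := norm_pos_iff.mpr hz
  have h0' : 0 < ‖z'‖ := norm_pos_iff.mpr hz'
  have e : ‖z - z'‖ ^ 2 = ‖z‖ ^ 2 + ‖z'‖ ^ 2 - 2 * (‖z‖ * ‖z'‖ * Real.cos (z.arg - z'.arg)) := by
    rw [Real.cos_sub]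
    have e1 := Complex.norm_mul_cos_arg z
    have e2 := Complex.norm_mul_cos_arg z'
    have e3 := Complex.norm_mul_sin_arg z
    have e4 := Complex.norm_mul_sin_arg z'
    have : ‖z‖ * ‖z'‖ * (Real.cos z.arg * Real.cos z'.arg + Real.sin z.arg * Real.sin z'.arg)
        = z.re * z'.re + z.im * z'.im := by
      rw [← e1, ← e2, ← e3, ← e4]; ring
    rw [this, Complex.sq_norm, Complex.sq_norm, Complex.sq_norm, Complex.normSq_apply,
      Complex.normSq_apply, Complex.normSq_apply, Complex.sub_re, Complex.sub_im]
    ring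
  have hp : 0 < ‖z‖ * ‖z'‖ := mul_pos h0 h0'
  have e' : ‖z - z'‖ ^ 2 < ‖z‖ ^ 2 + ‖z'‖ ^ 2 - ‖z‖ * ‖z'‖ := by nlinarith
  rcases le_total ‖z‖ ‖z'‖ with hl | hl
  · right
    apply lt_of_pow_lt_pow_left₀ 2 h0'.le
    nlinarith
  · left
    apply lt_of_pow_lt_pow_left₀ 2 h0.le
    nlinarith

lemma cone (N : Finset ℂ) (hN : 5 ≤ N.card) (g : ℂ) (hg : g ≠ 0) (h0 : ∀ z ∈ N, z ≠ 0)
    (ha : ∀ z ∈ N, -(2 * π / 3) ≤ (g * z).arg ∧ (g * z).arg < 2 * π / 3) :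
    ∃ v ∈ N, ∃ w ∈ N, v ≠ w ∧ ‖v - w‖ < ‖v‖ := by
  have hpi := Real.pi_pos
  have hm : ∀ z ∈ N, ⌊((g * z).arg + 2 * π / 3) / (π / 3)⌋ ∈ Finset.Ico (0 : ℤ) 4 := by
    intro z hz
    obtain ⟨h1, h2⟩ := ha z hz
    rw [Finset.mem_Ico]
    constructor
    · apply Int.floor_nonneg.mpr
      apply div_nonneg <;> linarith
    · rw [Int.floor_lt, div_lt_iff₀ (by positivity)]
      push_cast
      linarith
  obtain ⟨a, haN, b, hbN, hab, hf⟩ := Finset.exists_ne_map_eq_of_card_lt_of_maps_to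
    (by simp; omega) hm
  have := Int.abs_sub_lt_one_of_floor_eq_floor hf
  rw [← sub_div, abs_div, abs_of_pos (show (0 : ℝ) < π / 3 by positivity),
    div_lt_one (by positivity)] at this
  have h3 := two_point (mul_ne_zero hg (h0 a haN)) (mul_ne_zero hg (h0 b hbN))
    (by rwa [add_sub_add_right_eq_sub] at this)
  rw [← mul_sub, norm_mul, norm_mul, norm_mul] at h3
  have hgp : 0 < ‖g‖ := norm_pos_iff.mpr hg
  rw [mul_lt_mul_iff_right₀ hgp, mul_lt_mul_iff_right₀ hgp] at h3
  rcases h3 with h3 | h3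
  · exact ⟨a, haN, b, hbN, hab, h3⟩
  · exact ⟨b, hbN, a, haN, hab.symm, by rwa [norm_sub_rev]⟩

lemma six (N : Finset ℂ) (hN : 6 ≤ N.card) (h0 : ∀ z ∈ N, z ≠ 0) :
    ∃ v ∈ N, ∃ w ∈ N, v ≠ w ∧ (‖v - w‖ < ‖v‖ ∨ (‖v - w‖ = ‖v‖ ∧ w.re < 0)) := by
  have hpi := Real.pi_pos
  by_cases hw : ∃ w ∈ N, w.re < 0
  · obtain ⟨w, hwN, hw⟩ := hw
    by_contra! hcon
    have hw0 := h0 w hwN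
    obtain ⟨a, ha, b, hb, hab, hlt⟩ := cone (N.erase w)
      (by rw [Finset.card_erase_of_mem hwN]; omega) (-w⁻¹) (by simpa using hw0)
      (fun z hz => h0 z (Finset.mem_of_mem_erase hz)) (by
        intro v hv
        obtain ⟨hvw, hvN⟩ := Finset.mem_erase.mp hv
        have h1 : ‖v‖ < ‖v - w‖ := by
          obtain ⟨h1, h2⟩ := hcon v hvN w hwN hvw
          rcases h1.lt_or_eq with h | h
          · exact h
          · exact absurd hw (not_lt.mpr (h2 h.symm))
        have h2 : ‖w‖ ≤ ‖v - w‖ := by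
          rw [norm_sub_rev]; exact (hcon w hwN v hvN hvw.symm).1
        have hv0 := h0 v hvN
        obtain ⟨z, hz⟩ : ∃ z, z = -w⁻¹ * v := ⟨_, rfl⟩
        rw [← hz]
        have hvz : v = -w * z := by rw [hz]; field_simp
        have hz0 : z ≠ 0 := by rw [hz]; exact mul_ne_zero (by simpa using hw0) hv0
        have hwp : 0 < ‖w‖ := norm_pos_iff.mpr hw0
        have hzp : 0 < ‖z‖ := norm_pos_iff.mpr hz0
        have hd : ‖v - w‖ = ‖w‖ * ‖z + 1‖ := by
          rw [hvz, show -w * z - w = -(w * (z + 1)) by ring, norm_neg, norm_mul]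
        have hd' : ‖v‖ = ‖w‖ * ‖z‖ := by rw [hvz, norm_mul, norm_neg]
        rw [hd, hd', mul_lt_mul_iff_right₀ hwp] at h1
        rw [hd] at h2
        have h2' : 1 ≤ ‖z + 1‖ := by
          by_contra! h
          nlinarith
        have hs : ‖z + 1‖ ^ 2 = ‖z‖ ^ 2 + 2 * z.re + 1 := by
          rw [Complex.sq_norm, Complex.sq_norm, Complex.normSq_apply, Complex.normSq_apply]
          simp
          ring
        have hre : -(‖z‖ / 2) < z.re := by
          rcases le_or_gt 1 ‖z‖ with h | h <;> nlinarith
        have hcos : -(1 / 2) < Real.cos z.arg := by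
          have := Complex.norm_mul_cos_arg z
          by_contra! h
          nlinarith
        have habs : |z.arg| < 2 * π / 3 := by
          by_contra! h
          have h5 := Real.cos_le_cos_of_nonneg_of_le_pi (by positivity) (Complex.abs_arg_le_pi z) h
          rw [Real.cos_abs, show 2 * π / 3 = π - π / 3 by ring, Real.cos_pi_sub,
            Real.cos_pi_div_three] at h5
          linarith
        obtain ⟨h6, h7⟩ := abs_lt.mp habs
        exact ⟨h6.le, h7⟩)
    have := (hcon a (Finset.mem_of_mem_erase ha) b (Finset.mem_of_mem_erase hb) hab).1
    linarith
  · push Not at hw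
    obtain ⟨a, ha, b, hb, hab, hlt⟩ := cone N (by omega) 1 one_ne_zero h0 (by
      intro z hz
      rw [one_mul]
      have := abs_le.mp (Complex.abs_arg_le_pi_div_two_iff.mpr (hw z hz))
      constructor <;> linarith)
    exact ⟨a, ha, b, hb, hab, Or.inl hlt⟩

/-- Cut formulation of 2-connectivity. -/
def Cut2 {V : Type*} (F : SimpleGraph V) : Prop :=
  ∀ X S : Set V, X.Subsingleton → Disjoint S X → S.Nonempty → (∃ b, b ∉ S ∧ b ∉ X) →
    ∃ a b, a ∈ S ∧ b ∉ S ∧ b ∉ X ∧ F.Adj a b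

lemma cut2_of_kconnected {V : Type*} [Fintype V] {F : SimpleGraph V} (h : KConnected 2 F) :
    Cut2 F := by
  rintro X S hX hd ⟨a, ha⟩ ⟨b, hb, hbX⟩
  have hc := h.2 X.toFinset (by
    have : X.toFinset.card ≤ 1 := by
      rw [Finset.card_le_one]
      intro a ha b hb
      exact hX (by simpa using ha) (by simpa using hb)
    omega)
  have haX : a ∉ X := fun h => Set.disjoint_left.mp hd ha h
  obtain ⟨q⟩ := hc.preconnected ⟨a, by simpa using haX⟩ ⟨b, by simpa using hbX⟩
  obtain ⟨d, -, hd1, hd2⟩ := q.exists_boundary_dart (Subtype.val ⁻¹' S) ha hb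
  refine ⟨d.fst, d.snd, hd1, hd2, ?_, d.adj⟩
  simpa using d.snd.2

lemma kconnected_of_cut2 {V : Type*} [Fintype V] {F : SimpleGraph V} (hV : 2 < Fintype.card V)
    (h : Cut2 F) : KConnected 2 F := by
  refine ⟨hV, fun X hX => ?_⟩
  have hne : ∃ a, a ∉ X := by
    by_contra! hc
    have : Fintype.card V ≤ X.card := by
      rw [← Finset.card_univ]; exact Finset.card_le_card fun x _ => hc x
    omega
  obtain ⟨a0, ha0⟩ := hne
  haveI : Nonempty {v : V | v ∉ X} := ⟨⟨a0, ha0⟩⟩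
  refine ⟨fun a b => ?_⟩
  by_contra hab
  obtain ⟨c, d, ⟨hc, hcr⟩, hd, hdX, hadj⟩ := h (X : Set V)
    {x | ∃ hx : x ∉ X, (F.induce {v : V | v ∉ X}).Reachable a ⟨x, hx⟩}
    (by
      intro x hx y hy
      exact Finset.card_le_one.mp (by omega) x hx y hy)
    (by
      rw [Set.disjoint_left]
      rintro x ⟨hx, -⟩ hx'
      exact hx hx')
    ⟨a, a.2, SimpleGraph.Reachable.refl _⟩
    ⟨b, fun ⟨_, hb⟩ => hab hb, b.2⟩
  apply hd
  refine ⟨hdX, hcr.trans (SimpleGraph.Adj.reachable ?_)⟩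
  exact hadj

/-- If the swap breaks 2-connectivity, then `uw` is removable. -/
lemma swap_or_delete {V : Type*} {F F' F'' : SimpleGraph V} (h : Cut2 F) {u v w t : V}
    (hv : F.Adj u v) (hw : F.Adj u w) (ht : F.Adj u t) (hvw : v ≠ w) (htv : t ≠ v) (htw : t ≠ w)
    (hF' : ∀ a b, F'.Adj a b ↔
      (F.Adj a b ∧ ¬ (a = u ∧ b = v) ∧ ¬ (a = v ∧ b = u)) ∨ (a = v ∧ b = w) ∨ (a = w ∧ b = v))
    (hF'' : ∀ a b, F''.Adj a b ↔ (F.Adj a b ∧ ¬ (a = u ∧ b = w) ∧ ¬ (a = w ∧ b = u))) :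
    Cut2 F' ∨ Cut2 F'' := by
  by_contra! hcon
  obtain ⟨h1, h2⟩ := hcon
  have huv := hv.ne
  have huw := hw.ne
  have hut := ht.ne
  -- normalise the first failing cut
  have key1 : ∃ S : Set V, u ∈ S ∧ v ∉ S ∧ w ∉ S ∧
      ∀ a b, a ∈ S → b ∉ S → b ≠ w → F.Adj a b → a = u ∧ b = v := by
    unfold Cut2 at h1
    push Not at h1
    obtain ⟨X, S, hX, hd, hS, hb, hno⟩ := h1
    obtain ⟨a, b, ha, hb, hbX, hab⟩ := h X S hX hd hS hb
    rw [Set.disjoint_left] at hd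
    have hwX : w ∈ X := by
      by_contra hwX
      have := hno a b ha hb hbX
      have := hno u w
      have := hno w u
      have := hno v w
      have := hno w v
      have := hF' u w
      have := hF' w u
      have := hF' v w
      have := hF' w v
      have := hw.symm
      grind
    have hXw : ∀ x, x ∈ X ↔ x = w := fun x => ⟨fun hx => hX hx hwX, fun hx => hx ▸ hwX⟩
    have hab' : (a = u ∧ b = v) ∨ (a = v ∧ b = u) := by
      have := hno a b ha hb hbX
      grind
    rcases hab' with ⟨rfl, rfl⟩ | ⟨rfl, rfl⟩
    · refine ⟨S, ha, hb, fun hh => hd hh hwX, fun c d hc hdd hdw hcd => ?_⟩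
      have := hno c d hc hdd (by rwa [hXw])
      grind
    · refine ⟨{x | x ∉ S ∧ x ≠ w}, by grind, by grind, by grind, fun c d hc hdd hdw hcd => ?_⟩
      have h3 : d ∈ S := by
        by_contra hh
        exact hdd ⟨hh, hdw⟩
      have := hno d c h3 hc.1 (by rw [hXw]; exact hc.2)
      have := hcd.symm
      grind
  have key2 : ∃ X S : Set V, X.Subsingleton ∧ u ∈ S ∧ w ∉ S ∧ w ∉ X ∧ (∀ x ∈ S, x ∉ X) ∧
      ∀ a b, a ∈ S → b ∉ S → b ∉ X → F.Adj a b → a = u ∧ b = w := by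
    unfold Cut2 at h2
    push Not at h2
    obtain ⟨X, S, hX, hd, hS, hb, hno⟩ := h2
    obtain ⟨a, b, ha, hb, hbX, hab⟩ := h X S hX hd hS hb
    rw [Set.disjoint_left] at hd
    have hab' : (a = u ∧ b = w) ∨ (a = w ∧ b = u) := by
      have := hno a b ha hb hbX
      grind
    rcases hab' with ⟨rfl, rfl⟩ | ⟨rfl, rfl⟩
    · refine ⟨X, S, hX, ha, hb, hbX, fun x hx => hd hx, fun c d hc hdd hdw hcd => ?_⟩
      have := hno c d hc hdd hdw
      grind
    · refine ⟨X, {x | x ∉ S ∧ x ∉ X}, hX, by grind, by grind, hd ha, by grind,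
        fun c d hc hdd hdw hcd => ?_⟩
      have h3 : d ∈ S := by
        by_contra hh
        exact hdd ⟨hh, hdw⟩
      have := hno d c h3 hc.1 hc.2
      have := hcd.symm
      grind
  obtain ⟨S, huS, hvS, hwS, hno⟩ := key1
  obtain ⟨X, S', hX, huS', hwS', hwX, hd', hno'⟩ := key2
  by_cases hXS : ∃ x ∈ X, x ∈ S
  · obtain ⟨x, hxX, hxS⟩ := hXS
    have hX' : ∀ y ∈ X, y = x := fun y hy => hX hy hxX
    have hvS' : v ∈ S' := by
      by_contra hh
      have := hno' u v huS' hh (by grind) hv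
      grind
    obtain ⟨a, b, ha, hb, hbu, hab⟩ := h {u} {y | y ∉ S ∧ y ≠ w ∧ y ∈ S'} (by simp)
      (by simp [huS]) ⟨v, hvS, hvw, hvS'⟩ ⟨w, by simp, by simpa using huw.symm⟩
    simp only [Set.mem_singleton_iff, Set.mem_setOf_eq] at ha hb hbu
    have e1 := hno b a
    have e2 := hno' a b
    have e3 := hab.symm
    grind
  · have htS : t ∈ S := by
      by_contra hh
      have := hno u t huS hh htw ht
      grind
    have htS' : t ∈ S' := by
      by_contra hh
      have := hno' u t huS' hh (by grind) ht
      grind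
    obtain ⟨a, b, ha, hb, hbu, hab⟩ := h {u} {y | y ∈ S ∧ y ≠ u ∧ y ∈ S'} (by simp)
      (by simp) ⟨t, htS, hut.symm, htS'⟩ ⟨w, by simp [hwS], by simpa using huw.symm⟩
    simp only [Set.mem_singleton_iff, Set.mem_setOf_eq] at ha hb hbu
    have e1 := hno a b
    have e2 := hno' a b
    grind

/-- Edge weights: length, with ties broken by the first coordinate. -/
def wt {V : Type*} (p : V → Pt) : Sym2 V → ℝ ×ₗ ℝ :=
  Sym2.lift ⟨fun a b => toLex (dist (p a) (p b), p a 0 + p b 0),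
    fun a b => by simp only [dist_comm (p a), add_comm (p a 0)]⟩

def gwt {V : Type*} [Fintype V] (p : V → Pt) (G : SimpleGraph V) : ℝ ×ₗ ℝ :=
  ∑ e ∈ G.edgeFinset, wt p e

lemma wt_pos {V : Type*} {p : V → Pt} (hp : Function.Injective p) {G : SimpleGraph V}
    {e : Sym2 V} (he : e ∈ G.edgeSet) : 0 < wt p e := by
  induction e with
  | _ a b =>
    have hab : a ≠ b := SimpleGraph.Adj.ne he
    apply Prod.Lex.toLex_lt_toLex.mpr
    left
    exact dist_pos.mpr (hp.ne hab)

lemma gwt_lt_of_lt {V : Type*} [Fintype V] {p : V → Pt} (hp : Function.Injective p)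
    {F F' : SimpleGraph V} (h : F' < F) : gwt p F' < gwt p F := by
  obtain ⟨e, he, he'⟩ := Set.exists_of_ssubset (SimpleGraph.edgeSet_ssubset_edgeSet.mpr h)
  apply Finset.sum_lt_sum_of_subset (i := e)
  · intro x hx
    rw [SimpleGraph.mem_edgeFinset] at *
    exact SimpleGraph.edgeSet_subset_edgeSet.mpr h.le hx
  · simpa using he
  · simpa using he'
  · exact wt_pos hp he
  · intro j hj _
    exact (wt_pos hp (by simpa using hj)).le

lemma gwt_swap {V : Type*} [Fintype V] {p : V → Pt} (hp : Function.Injective p)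
    {F F' : SimpleGraph V} {e e' : Sym2 V} (he : e ∈ F.edgeSet) (he' : e' ∈ (⊤ : SimpleGraph V).edgeSet)
    (hlt : wt p e' < wt p e)
    (hs : F'.edgeSet ⊆ insert e' (F.edgeSet \ {e})) : gwt p F' < gwt p F := by
  have h1 : gwt p F' ≤ ∑ x ∈ insert e' (F.edgeFinset.erase e), wt p x := by
    apply Finset.sum_le_sum_of_subset_of_nonneg
    · intro x hx
      have := hs (by simpa using hx)
      simp at this ⊢
      tauto
    · intro x hx _
      rcases Finset.mem_insert.mp hx with rfl | hx
      · exact (wt_pos hp he').le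
      · exact (wt_pos (G := F) hp (by simpa using Finset.mem_of_mem_erase hx)).le
  have h2 : ∑ x ∈ insert e' (F.edgeFinset.erase e), wt p x
      ≤ wt p e' + ∑ x ∈ F.edgeFinset.erase e, wt p x := by
    by_cases hm : e' ∈ F.edgeFinset.erase e
    · rw [Finset.insert_eq_of_mem hm]
      exact le_add_of_nonneg_left (wt_pos hp he').le
    · rw [Finset.sum_insert hm]
  have h3 : wt p e + ∑ x ∈ F.edgeFinset.erase e, wt p x = gwt p F :=
    Finset.add_sum_erase _ _ (by simpa using he)
  rw [← h3]
  exact (h1.trans h2).trans_lt (by gcongr)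

/-- Six neighbours give an improving swap. -/
lemma exists_improving_swap {V : Type*} {p : V → Pt} (hp : Function.Injective p) (u : V) (N : Finset V)
    (hN : 6 ≤ N.card) (hu : u ∉ N) :
    ∃ v ∈ N, ∃ w ∈ N, v ≠ w ∧ wt p s(v, w) < wt p s(u, v) := by
  let c : V → ℂ := fun v => ⟨p v 0 - p u 0, p v 1 - p u 1⟩
  have hcu : c u = 0 := by simp [c]; rfl
  have hdist : ∀ a b, dist (p a) (p b) = ‖c a - c b‖ := by
    intro a b
    rw [EuclideanSpace.dist_eq, Complex.norm_eq_sqrt_sq_add_sq]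
    simp [c, Real.dist_eq]
  have hc : Function.Injective c := by
    intro a b hab
    apply hp
    rw [← dist_eq_zero, hdist, hab, sub_self, norm_zero]
  obtain ⟨z, hz, z', hz', hne, hlt⟩ := six (N.image c)
    (by rwa [Finset.card_image_of_injective _ hc]) (by
      intro z hz h0
      obtain ⟨a, ha, rfl⟩ := Finset.mem_image.mp hz
      rw [← hcu] at h0
      exact hu (hc h0 ▸ ha))
  obtain ⟨v, hv, rfl⟩ := Finset.mem_image.mp hz
  obtain ⟨w, hw, rfl⟩ := Finset.mem_image.mp hz'
  refine ⟨v, hv, w, hw, fun h => hne (h ▸ rfl), ?_⟩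
  have hnv : ‖c v‖ = dist (p u) (p v) := by rw [hdist, hcu, zero_sub, norm_neg]
  rw [hnv, ← hdist] at hlt
  apply Prod.Lex.toLex_lt_toLex.mpr
  rcases hlt with h | ⟨h, h'⟩
  · exact Or.inl h
  · refine Or.inr ⟨h, ?_⟩
    have : p w 0 - p u 0 < 0 := h'
    show p v 0 + p w 0 < p u 0 + p v 0
    linarith

/-- Every 2-connected unit disk graph `G` has a 2-connected spanning subgraph
in which every vertex has degree at most 5. -/
theorem exists_two_connected_spanning_degree_le_five {V : Type*} [Fintype V]
    (G : SimpleGraph V) (p : V → Pt) (hudg : IsUnitDiskGraph G p)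
    (hG : KConnected 2 G) :
    ∃ F : SimpleGraph V, F ≤ G ∧ KConnected 2 F ∧ ∀ v, F.degree v ≤ 5 := by
  obtain ⟨hp, hadj⟩ := hudg
  obtain ⟨F, hF, hmin⟩ := Finset.exists_min_image
    (Finset.univ.filter fun F : SimpleGraph V => F ≤ G ∧ KConnected 2 F) (gwt p)
    ⟨G, by simp [hG]⟩
  simp only [Finset.mem_filter, Finset.mem_univ, true_and] at hF hmin
  obtain ⟨hFG, hF2⟩ := hF
  refine ⟨F, hFG, hF2, fun u => ?_⟩
  by_contra! hdeg
  obtain ⟨v, hv, w, hw, hvw, hlt⟩ := exists_improving_swap hp u (F.neighborFinset u)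
    (by rw [SimpleGraph.card_neighborFinset_eq_degree]; omega) (by simp)
  obtain ⟨t, ht⟩ : ∃ t, t ∈ ((F.neighborFinset u).erase v).erase w := by
    apply Finset.card_pos.mp
    have h1 := Finset.pred_card_le_card_erase (s := F.neighborFinset u) (a := v)
    have h2 := Finset.pred_card_le_card_erase (s := (F.neighborFinset u).erase v) (a := w)
    rw [SimpleGraph.card_neighborFinset_eq_degree] at h1
    omega
  simp only [Finset.mem_erase, SimpleGraph.mem_neighborFinset] at ht hv hw
  have hvwG : G.Adj v w := by
    rw [hadj]
    refine ⟨hvw, ?_⟩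
    have h1 := ((hadj u v).mp (hFG hv)).2
    rcases Prod.Lex.toLex_lt_toLex.mp hlt with h | h
    · exact h.le.trans h1
    · exact h.1.le.trans h1
  let F' : SimpleGraph V := F.deleteEdges {s(u, v)} ⊔ SimpleGraph.fromEdgeSet {s(v, w)}
  let F'' : SimpleGraph V := F.deleteEdges {s(u, w)}
  rcases swap_or_delete (F' := F') (F'' := F'') (cut2_of_kconnected hF2) hv hw ht.2.2 hvw
    ht.2.1 ht.1 (by
      intro a b
      simp only [F', SimpleGraph.sup_adj, SimpleGraph.deleteEdges_adj, SimpleGraph.fromEdgeSet_adj,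
        Set.mem_singleton_iff, Sym2.eq_iff]
      grind) (by
      intro a b
      simp only [F'', SimpleGraph.deleteEdges_adj,
        Set.mem_singleton_iff, Sym2.eq_iff]
      grind) with h | h
  · have hle : F' ≤ G := by
      apply sup_le ((SimpleGraph.deleteEdges_le _).trans hFG)
      intro a b hab
      simp only [SimpleGraph.fromEdgeSet_adj, Set.mem_singleton_iff, Sym2.eq_iff] at hab
      have := hvwG.symm
      grind
    have h1 := hmin F' ⟨hle, kconnected_of_cut2 hG.1 h⟩
    have h2 : gwt p F' < gwt p F := by
      apply gwt_swap hp (e := s(u, v)) (e' := s(v, w)) hv (by simpa using hvw) hlt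
      intro x hx
      simp only [F', SimpleGraph.edgeSet_sup, SimpleGraph.edgeSet_deleteEdges,
        SimpleGraph.edgeSet_fromEdgeSet, Set.mem_union, Set.mem_diff] at hx
      simp only [Set.mem_insert_iff, Set.mem_diff]
      rcases hx with hx | hx
      · exact Or.inr hx
      · exact Or.inl hx.1
    exact absurd h1 (not_le.mpr h2)
  · have hle : F'' ≤ F := SimpleGraph.deleteEdges_le _
    have h1 := hmin F'' ⟨hle.trans hFG, kconnected_of_cut2 hG.1 h⟩
    have h2 : F'' < F := by
      refine lt_of_le_of_ne hle fun heq => ?_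
      have : F''.Adj u w := heq ▸ hw
      simp [F''] at this
    exact absurd h1 (not_le.mpr (gwt_lt_of_lt hp h2))
end
end

section
/- Let G be a 2-connected unit disk graph and F a minimum-length 2-connected spanning subgraph of G. If a vertex u has degree exactly 6 in F, then each neighbor of u has degree at most 4 in F. -/
open scoped Classical
open EuclideanGeometry Real

noncomputable section

def delV {V : Type*} (F : SimpleGraph V) (x : V) : SimpleGraph V where
  Adj a b := F.Adj a b ∧ a ≠ x ∧ b ≠ x
  symm := ⟨fun _ _ h => ⟨h.1.symm, h.2.2, h.2.1⟩⟩
  loopless := ⟨fun _ h => h.1.ne rfl⟩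

/-- `F` with the edge `ab` removed. -/
def delE {V : Type*} (F : SimpleGraph V) (u w : V) : SimpleGraph V where
  Adj a b := F.Adj a b ∧ s(a, b) ≠ s(u, w)
  symm := ⟨fun a b h => ⟨h.1.symm, by rw [Sym2.eq_swap]; exact h.2⟩⟩
  loopless := ⟨fun _ h => h.1.ne rfl⟩

/-- The exchange `F - uw + vw`. -/
def exch {V : Type*} (F : SimpleGraph V) (u v w : V) : SimpleGraph V where
  Adj a b := (F.Adj a b ∧ s(a, b) ≠ s(u, w)) ∨ (s(a, b) = s(v, w) ∧ a ≠ b)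
  symm := ⟨fun a b h => by rw [Sym2.eq_swap, F.adj_comm, ne_comm (a := b)]; exact h⟩
  loopless := ⟨fun _ h => by rcases h with h | h; exacts [h.1.ne rfl, h.2 rfl]⟩

lemma delV_of_walk {V : Type*} {F : SimpleGraph V} {x a b : V} (ha : a ≠ x) (hb : b ≠ x) :
    (delV F x).Reachable a b ↔
      (F.induce {v : V | v ∉ ({x} : Finset V)}).Reachable ⟨a, by simpa using ha⟩
        ⟨b, by simpa using hb⟩ := by
  constructor
  · intro h
    rw [SimpleGraph.reachable_iff_reflTransGen] at h
    have : ∀ c, Relation.ReflTransGen (delV F x).Adj a c → ∃ hc : c ≠ x,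
        (F.induce {v : V | v ∉ ({x} : Finset V)}).Reachable ⟨a, by simpa using ha⟩
        ⟨c, by simpa using hc⟩ := by
      intro c hc
      induction hc with
      | refl => exact ⟨ha, SimpleGraph.Reachable.refl _⟩
      | tail h1 h2 ih =>
        obtain ⟨hc, ih⟩ := ih
        refine ⟨h2.2.2, ih.trans (SimpleGraph.Adj.reachable ?_)⟩
        simpa using h2.1
    exact (this b h).2
  · intro h
    let f : (F.induce {v : V | v ∉ ({x} : Finset V)}) →g delV F x :=
      { toFun := Subtype.val
        map_rel' := by
          rintro ⟨a, ha⟩ ⟨b, hb⟩ h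
          exact ⟨by simpa using h, by simpa using ha, by simpa using hb⟩ }
    exact h.map f

lemma kconn_iff {V : Type*} [Fintype V] (F : SimpleGraph V) :
    KConnected 2 F ↔ 2 < Fintype.card V ∧
      ∀ x a b, a ≠ x → b ≠ x → (delV F x).Reachable a b := by
  constructor
  · rintro ⟨h, h2⟩
    refine ⟨h, fun x a b ha hb => ?_⟩
    rw [delV_of_walk ha hb]
    exact (h2 {x} (by simp)).preconnected _ _
  · rintro ⟨h, h2⟩
    refine ⟨h, fun S hS => ?_⟩
    have hne : ∀ a b : V, ∃ x, a ≠ x ∧ b ≠ x := by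
      intro a b
      by_contra! hc
      have : (Finset.univ : Finset V) ⊆ {a, b} := by
        intro x _
        have := hc x
        simp only [Finset.mem_insert, Finset.mem_singleton]
        by_cases h : a = x
        · exact Or.inl h.symm
        · exact Or.inr (this h).symm
      have := Finset.card_le_card this
      have h3 := Finset.card_le_two (a := a) (b := b)
      rw [Finset.card_univ] at this
      omega
    have hV : Nonempty V := Fintype.card_pos_iff.mp (by omega)
    have hS' : S = ∅ ∨ ∃ x, S = {x} := by
      have : S.card = 0 ∨ S.card = 1 := by omega
      rcases this with h | h
      · exact Or.inl (Finset.card_eq_zero.mp h)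
      · exact Or.inr (Finset.card_eq_one.mp h)
    rcases hS' with rfl | ⟨x, rfl⟩
    · rw [SimpleGraph.connected_iff]
      refine ⟨?_, ⟨⟨hV.some, by simp⟩⟩⟩
      rintro ⟨a, ha⟩ ⟨b, hb⟩
      obtain ⟨x, hax, hbx⟩ := hne a b
      let f : delV F x →g F.induce {v : V | v ∉ (∅ : Finset V)} :=
        { toFun := fun v => ⟨v, by simp⟩
          map_rel' := by
            intro a b h
            simpa using h.1 }
      exact (h2 x a b hax hbx).map f
    · rw [SimpleGraph.connected_iff]
      obtain ⟨y, hy, -⟩ := hne x x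
      refine ⟨?_, ⟨⟨y, by simpa using hy.symm⟩⟩⟩
      rintro ⟨a, ha⟩ ⟨b, hb⟩
      have ha' : a ≠ x := by simpa using ha
      have hb' : b ≠ x := by simpa using hb
      exact (delV_of_walk ha' hb').mp (h2 x a b ha' hb')

lemma kconn_of_del {V : Type*} [Fintype V] {F H : SimpleGraph V} {u w : V}
    (hF : KConnected 2 F) (hH : ∀ a b, F.Adj a b → s(a, b) ≠ s(u, w) → H.Adj a b)
    (hr : ∀ x, x ≠ u → x ≠ w → (delV H x).Reachable u w) : KConnected 2 H := by
  rw [kconn_iff] at hF ⊢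
  refine ⟨hF.1, fun x a b ha hb => ?_⟩
  have h := hF.2 x a b ha hb
  rw [SimpleGraph.reachable_iff_reflTransGen] at h
  induction h with
  | refl => exact SimpleGraph.Reachable.refl _
  | @tail c d h1 h2 ih =>
    refine (ih h2.2.1).trans ?_
    by_cases he : s(c, d) = s(u, w)
    · rw [Sym2.eq_iff] at he
      rcases he with ⟨rfl, rfl⟩ | ⟨rfl, rfl⟩
      · exact hr x h2.2.1.symm h2.2.2.symm
      · exact (hr x h2.2.2.symm h2.2.1.symm).symm
    · exact SimpleGraph.Adj.reachable (G := delV H x) ⟨hH _ _ h2.1 he, h2.2.1, h2.2.2⟩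

lemma reach_aux {V : Type*} {F : SimpleGraph V} {u v w s x : V} (huv : u ≠ v)
    (hsu : s ≠ u) (hsv : s ≠ v)
    (hr : (delV F u).Reachable s v) (hxv : x ≠ v)
    (hx : ¬ (delV (delE F u w) v).Reachable s x) :
    (delV (delE F u v) x).Reachable s v := by
  by_contra hcon
  rw [SimpleGraph.reachable_iff_reflTransGen] at hr
  have : ∀ b, Relation.ReflTransGen (delV F u).Adj s b →
      b ≠ v ∧ (delV (delE F u w) v).Reachable s b ∧ (delV (delE F u v) x).Reachable s b := by
    intro b hb
    induction hb with
    | refl => exact ⟨hsv, SimpleGraph.Reachable.refl _, SimpleGraph.Reachable.refl _⟩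
    | @tail b c h1 h2 ih =>
      obtain ⟨hbv, hP, hQ⟩ := ih
      have hbx : b ≠ x := by rintro rfl; exact hx hP
      obtain ⟨hadj, hbu, hcu⟩ := h2
      have he : ∀ t, s(b, c) ≠ s(u, t) := by
        intro t h
        rw [Sym2.eq_iff] at h
        rcases h with ⟨h, -⟩ | ⟨-, h⟩
        · exact hbu h
        · exact hcu h
      by_cases hcv : c = v
      · subst hcv
        exact absurd (hQ.trans (SimpleGraph.Adj.reachable (G := delV (delE F u c) x)
          ⟨⟨hadj, he _⟩, hbx, hxv.symm⟩)) hcon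
      · have hPc := hP.trans (SimpleGraph.Adj.reachable (G := delV (delE F u w) v)
          ⟨⟨hadj, he _⟩, hbv, hcv⟩)
        have hcx : c ≠ x := by rintro rfl; exact hx hPc
        exact ⟨hcv, hPc, hQ.trans (SimpleGraph.Adj.reachable (G := delV (delE F u v) x)
          ⟨⟨hadj, he _⟩, hbx, hcx⟩)⟩
  exact (this v hr).1 rfl

lemma glen_delE {V : Type*} [Fintype V] (p : V → Pt) (F : SimpleGraph V) {u w : V}
    (h : F.Adj u w) : glen p (delE F u w) + dist (p u) (p w) = glen p F := by
  unfold glen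
  have : (delE F u w).edgeFinset = F.edgeFinset.erase s(u, w) := by
    ext e
    induction e using Sym2.ind with
    | _ a b =>
      simp only [SimpleGraph.mem_edgeFinset, Finset.mem_erase, SimpleGraph.mem_edgeSet]
      exact and_comm
  rw [this]
  exact Finset.sum_erase_add (f := edgeLen p) _ (by simpa using h)

lemma glen_exch {V : Type*} [Fintype V] (p : V → Pt) (F : SimpleGraph V) {u v w : V}
    (h : F.Adj u w) (hvw : ¬ F.Adj v w) (hne : v ≠ w) :
    glen p (exch F u v w) + dist (p u) (p w) = glen p F + dist (p v) (p w) := by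
  rw [← glen_delE p F h]
  have : (exch F u v w).edgeFinset = insert s(v, w) (delE F u w).edgeFinset := by
    ext e
    induction e using Sym2.ind with
    | _ a b =>
      simp only [SimpleGraph.mem_edgeFinset, Finset.mem_insert, SimpleGraph.mem_edgeSet]
      constructor
      · rintro (h | h)
        · exact Or.inr h
        · exact Or.inl h.1
      · rintro (h | h)
        · refine Or.inr ⟨h, ?_⟩
          rintro rfl
          rw [Sym2.eq_iff] at h
          rcases h with ⟨e1, e2⟩ | ⟨e1, e2⟩
          · exact hne (e1.symm.trans e2)
          · exact hne (e2.symm.trans e1)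
        · exact Or.inl h
  have h2 : glen p (exch F u v w) = dist (p v) (p w) + glen p (delE F u w) := by
    unfold glen
    rw [this]
    refine Finset.sum_insert (f := edgeLen p) ?_
    simp only [SimpleGraph.mem_edgeFinset, SimpleGraph.mem_edgeSet]
    exact fun h => hvw h.1
  rw [h2]; ring

lemma not_kconn_del {V : Type*} [Fintype V] {G F : SimpleGraph V} {p : V → Pt}
    (hudg : IsUnitDiskGraph G p) (hF : IsMSS 2 p G F) {u w : V} (h : F.Adj u w) :
    ¬ KConnected 2 (delE F u w) := by
  intro hc
  have h1 := hF.2.2 (delE F u w) (fun a b h => hF.1 h.1) hc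
  have h2 := glen_delE p F h
  have h3 : 0 < dist (p u) (p w) := dist_pos.mpr (hudg.1.ne h.ne)
  linarith

lemma key {V : Type*} [Fintype V] {G F : SimpleGraph V} {p : V → Pt}
    (hudg : IsUnitDiskGraph G p) (hF : IsMSS 2 p G F) {u v w y : V} (hv : F.Adj u v)
    (hw : F.Adj u w) (hy : F.Adj u y) (hvw : v ≠ w) (hyv : y ≠ v) (hyw : y ≠ w) :
    (delV (delE F u w) v).Reachable u w := by
  by_contra hcon
  apply not_kconn_del hudg hF hv
  have hk := (kconn_iff F).mp hF.2.1
  refine kconn_of_del hF.2.1 (fun a b h h' => ⟨h, h'⟩) fun x hxu hxv => ?_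
  have main : ∀ s, F.Adj u s → s ≠ v → ¬ (delV (delE F u w) v).Reachable s x →
      (delV (delE F u v) x).Reachable u v := by
    intro s hs hsv hsx
    have hsx' : s ≠ x := by rintro rfl; exact hsx (SimpleGraph.Reachable.refl _)
    have h1 := reach_aux hv.ne hs.ne.symm hsv (hk.2 u s v hs.ne.symm hv.ne.symm) hxv hsx
    refine SimpleGraph.Reachable.trans (SimpleGraph.Adj.reachable
      (G := delV (delE F u v) x) ⟨⟨hs, ?_⟩, hxu.symm, hsx'⟩) h1
    intro h
    rw [Sym2.eq_iff] at h
    rcases h with ⟨-, h⟩ | ⟨h, -⟩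
    · exact hsv h
    · exact hv.ne h
  by_cases hwx : (delV (delE F u w) v).Reachable w x
  · refine main y hy hyv fun hyx => hcon ?_
    refine SimpleGraph.Reachable.trans (SimpleGraph.Adj.reachable
      (G := delV (delE F u w) v) ⟨⟨hy, ?_⟩, hv.ne, hyv⟩) (hyx.trans hwx.symm)
    intro h
    rw [Sym2.eq_iff] at h
    rcases h with ⟨-, h⟩ | ⟨h, -⟩
    · exact hyw h
    · exact hw.ne h
  · exact main w hw hvw.symm hwx

lemma delV_mono {V : Type*} {F H : SimpleGraph V} (h : F ≤ H) (x : V) : delV F x ≤ delV H x :=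
  fun _ _ h' => ⟨h h'.1, h'.2⟩

lemma exch_kconn {V : Type*} [Fintype V] {G F H : SimpleGraph V} {p : V → Pt}
    (hudg : IsUnitDiskGraph G p) (hF : IsMSS 2 p G F) {u v w y : V} (hv : F.Adj u v)
    (hw : F.Adj u w) (hy : F.Adj u y) (hvw : v ≠ w) (hyv : y ≠ v) (hyw : y ≠ w)
    (hH : delE F u w ≤ H) (hHvw : H.Adj v w) : KConnected 2 H := by
  refine kconn_of_del hF.2.1 (fun a b h h' => hH ⟨h, h'⟩) fun x hxu hxw => ?_
  by_cases hxv : x = v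
  · subst hxv
    exact (key hudg hF hv hw hy hvw hyv hyw).mono (delV_mono hH _)
  · have huv : H.Adj u v := by
      refine hH ⟨hv, ?_⟩
      intro h
      rw [Sym2.eq_iff] at h
      rcases h with ⟨-, h⟩ | ⟨h, -⟩
      · exact hvw h
      · exact hw.ne h
    exact (SimpleGraph.Adj.reachable (G := delV H x) ⟨huv, Ne.symm hxu, Ne.symm hxv⟩).trans
      (SimpleGraph.Adj.reachable (G := delV H x) ⟨hHvw, Ne.symm hxv, Ne.symm hxw⟩)

lemma not_adj {V : Type*} [Fintype V] {G F : SimpleGraph V} {p : V → Pt}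
    (hudg : IsUnitDiskGraph G p) (hF : IsMSS 2 p G F) {u v w y : V} (hv : F.Adj u v)
    (hw : F.Adj u w) (hy : F.Adj u y) (hvw : v ≠ w) (hyv : y ≠ v) (hyw : y ≠ w) :
    ¬ F.Adj v w := by
  intro h
  refine not_kconn_del hudg hF hw (exch_kconn hudg hF hv hw hy hvw hyv hyw le_rfl ⟨h, ?_⟩)
  intro h
  rw [Sym2.eq_iff] at h
  rcases h with ⟨h, -⟩ | ⟨h, -⟩
  · exact hv.ne h.symm
  · exact hvw h

lemma exch_le {V : Type*} [Fintype V] {G F : SimpleGraph V} {p : V → Pt}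
    (hudg : IsUnitDiskGraph G p) (hF : IsMSS 2 p G F) {u v w : V}
    (hvw : v ≠ w) (hd : dist (p v) (p w) ≤ 1) : exch F u v w ≤ G := by
  intro a b h
  rcases h with h | ⟨h, -⟩
  · exact hF.1 h.1
  · have := (hudg.2 v w).mpr ⟨hvw, hd⟩
    rw [Sym2.eq_iff] at h
    rcases h with ⟨rfl, rfl⟩ | ⟨rfl, rfl⟩
    · exact this
    · exact this.symm

lemma exch_kconn' {V : Type*} [Fintype V] {G F : SimpleGraph V} {p : V → Pt}
    (hudg : IsUnitDiskGraph G p) (hF : IsMSS 2 p G F) {u v w y : V} (hv : F.Adj u v)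
    (hw : F.Adj u w) (hy : F.Adj u y) (hvw : v ≠ w) (hyv : y ≠ v) (hyw : y ≠ w) :
    KConnected 2 (exch F u v w) :=
  exch_kconn hudg hF hv hw hy hvw hyv hyw (fun _ _ h => Or.inl h) (Or.inr ⟨rfl, hvw⟩)

lemma dist_ge {V : Type*} [Fintype V] {G F : SimpleGraph V} {p : V → Pt}
    (hudg : IsUnitDiskGraph G p) (hF : IsMSS 2 p G F) {u v w y : V} (hv : F.Adj u v)
    (hw : F.Adj u w) (hy : F.Adj u y) (hvw : v ≠ w) (hyv : y ≠ v) (hyw : y ≠ w) :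
    dist (p u) (p w) ≤ dist (p v) (p w) := by
  have h1 := ((hudg.2 u w).mp (hF.1 hw)).2
  by_cases hd : dist (p v) (p w) ≤ 1
  · have h2 := hF.2.2 _ (exch_le (u := u) hudg hF hvw hd)
      (exch_kconn' hudg hF hv hw hy hvw hyv hyw)
    have h3 := glen_exch p F hw (not_adj hudg hF hv hw hy hvw hyv hyw) hvw
    linarith
  · linarith

lemma exch_mss {V : Type*} [Fintype V] {G F : SimpleGraph V} {p : V → Pt}
    (hudg : IsUnitDiskGraph G p) (hF : IsMSS 2 p G F) {u v w y : V} (hv : F.Adj u v)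
    (hw : F.Adj u w) (hy : F.Adj u y) (hvw : v ≠ w) (hyv : y ≠ v) (hyw : y ≠ w)
    (hd : dist (p v) (p w) = dist (p u) (p w)) :
    IsMSS 2 p G (exch F u v w) := by
  have h1 := ((hudg.2 u w).mp (hF.1 hw)).2
  refine ⟨exch_le (u := u) hudg hF hvw (hd ▸ h1), exch_kconn' hudg hF hv hw hy hvw hyv hyw, ?_⟩
  intro F' hF' hk
  have h2 := hF.2.2 F' hF' hk
  have h3 := glen_exch p F hw (not_adj hudg hF hv hw hy hvw hyv hyw) hvw
  linarith

lemma exch_degree {V : Type*} [Fintype V] {F : SimpleGraph V} {u v w : V} (huv : u ≠ v)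
    (hvw : v ≠ w) (h : ¬ F.Adj v w) : (exch F u v w).degree v = F.degree v + 1 := by
  have : (exch F u v w).neighborFinset v = insert w (F.neighborFinset v) := by
    ext x
    simp only [SimpleGraph.mem_neighborFinset, Finset.mem_insert]
    constructor
    · rintro (h | ⟨h, -⟩)
      · exact Or.inr h.1
      · rw [Sym2.eq_iff] at h
        rcases h with ⟨-, h⟩ | ⟨h, -⟩
        · exact Or.inl h
        · exact absurd h hvw
    · rintro (rfl | h')
      · exact Or.inr ⟨rfl, hvw⟩
      · refine Or.inl ⟨h', fun he => ?_⟩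
        rw [Sym2.eq_iff] at he
        rcases he with ⟨h, -⟩ | ⟨h, -⟩
        · exact huv h.symm
        · exact hvw h
  rw [← SimpleGraph.card_neighborFinset_eq_degree, ← SimpleGraph.card_neighborFinset_eq_degree,
    this, Finset.card_insert_of_notMem (by simpa using h)]

lemma exch_adj_of_ne {V : Type*} {F : SimpleGraph V} {u v w x : V} (h : F.Adj u x)
    (hx : x ≠ w) : (exch F u v w).Adj u x := by
  refine Or.inl ⟨h, fun he => ?_⟩
  rw [Sym2.eq_iff] at he
  rcases he with ⟨-, hh⟩ | ⟨rfl, hh⟩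
  · exact hx hh
  · exact h.ne hh.symm

/-! ### Geometry -/

lemma floor_lemma {ι : Type*} (T : Finset ι) (f : ι → ℝ) (h1 : ∀ x ∈ T, 1 ≤ f x)
    (h5 : ∀ x ∈ T, f x ≤ 5) (hsep : ∀ x ∈ T, ∀ y ∈ T, x ≠ y → 1 ≤ |f x - f y|)
    (hc : 5 ≤ T.card) : T.card = 5 ∧ ∃ x ∈ T, f x = 5 := by
  have hinj : Set.InjOn (fun x => ⌊f x⌋) (T : Set ι) := by
    intro x hx y hy hxy
    by_contra hne
    have := hsep x hx y hy hne
    have h2 := Int.abs_sub_lt_one_of_floor_eq_floor hxy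
    linarith
  have hmaps : T.image (fun x => ⌊f x⌋) ⊆ Finset.Icc 1 5 := by
    intro k hk
    obtain ⟨x, hx, rfl⟩ := Finset.mem_image.mp hk
    rw [Finset.mem_Icc]
    constructor
    · exact Int.le_floor.mpr (by simpa using h1 x hx)
    · have : (⌊f x⌋ : ℝ) ≤ 5 := (Int.floor_le _).trans (h5 x hx)
      exact_mod_cast this
  have hcard : (T.image (fun x => ⌊f x⌋)).card = T.card := Finset.card_image_of_injOn hinj
  have hI : (Finset.Icc (1 : ℤ) 5).card = 5 := by simp
  have hle := Finset.card_le_card hmaps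
  have heq := Finset.eq_of_subset_of_card_le hmaps (by omega)
  refine ⟨by omega, ?_⟩
  have : (5 : ℤ) ∈ T.image (fun x => ⌊f x⌋) := by rw [heq]; simp
  obtain ⟨x, hx, hx5⟩ := Finset.mem_image.mp this
  refine ⟨x, hx, le_antisymm (h5 x hx) ?_⟩
  have h := Int.floor_le (f x)
  have hx5' : ⌊f x⌋ = 5 := hx5
  rw [hx5'] at h
  exact_mod_cast h

lemma floor_lemma' {ι : Type*} (T : Finset ι) (f : ι → ℝ) (h1 : ∀ x ∈ T, 1 ≤ f x)
    (h5 : ∀ x ∈ T, f x ≤ 5) (hsep : ∀ x ∈ T, ∀ y ∈ T, x ≠ y → 1 ≤ |f x - f y|)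
    (hc : 5 ≤ T.card) : T.card = 5 ∧ (∃ x ∈ T, f x = 1) ∧ ∃ x ∈ T, f x = 5 := by
  obtain ⟨h, x, hx, hx5⟩ := floor_lemma T f h1 h5 hsep hc
  obtain ⟨-, y, hy, hy5⟩ := floor_lemma T (fun x => 6 - f x)
    (fun x hx => by have := h5 x hx; linarith) (fun x hx => by have := h1 x hx; linarith)
    (fun x hx y hy hne => by
      have := hsep x hx y hy hne
      rw [abs_sub_comm] at this
      have e : 6 - f x - (6 - f y) = f y - f x := by ring
      simp only [e]; exact this) hc
  exact ⟨h, ⟨y, hy, by linarith⟩, x, hx, hx5⟩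

lemma polar (q : Pt) (α : ℝ) : ∃ φ, α ≤ φ ∧ φ < α + 2 * π ∧ q 0 = ‖q‖ * Real.cos φ ∧
    q 1 = ‖q‖ * Real.sin φ := by
  set z : ℂ := ⟨q 0, q 1⟩ with hz
  have hn : ‖z‖ = ‖q‖ := by
    rw [EuclideanSpace.norm_eq, Complex.norm_def, Complex.normSq_apply]
    simp [Fin.sum_univ_two, hz, pow_two]
  have hpi : (0 : ℝ) < 2 * π := by positivity
  have hm := toIcoMod_mem_Ico hpi α z.arg
  refine ⟨toIcoMod hpi α z.arg, hm.1, hm.2, ?_, ?_⟩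
  · have := Complex.norm_mul_cos_arg z
    rw [toIcoMod, zsmul_eq_mul, Real.cos_sub_int_mul_two_pi, ← hn, this]
  · have := Complex.norm_mul_sin_arg z
    rw [toIcoMod, zsmul_eq_mul, Real.sin_sub_int_mul_two_pi, ← hn, this]

lemma dist_polar {a b c : Pt} {φ ψ : ℝ} (h0 : (a - c) 0 = ‖a - c‖ * Real.cos φ)
    (h1 : (a - c) 1 = ‖a - c‖ * Real.sin φ) (h2 : (b - c) 0 = ‖b - c‖ * Real.cos ψ)
    (h3 : (b - c) 1 = ‖b - c‖ * Real.sin ψ) :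
    dist a b ^ 2 = dist c a ^ 2 + dist c b ^ 2
      - 2 * dist c a * dist c b * Real.cos (φ - ψ) := by
  rw [dist_comm c a, dist_comm c b, dist_eq_norm a c, dist_eq_norm b c, EuclideanSpace.dist_eq,
    Real.sq_sqrt (by positivity)]
  simp only [Fin.sum_univ_two, Real.dist_eq, sq_abs]
  have e0 : a 0 - b 0 = (a - c) 0 - (b - c) 0 := by simp
  have e1 : a 1 - b 1 = (a - c) 1 - (b - c) 1 := by simp
  rw [e0, e1, h0, h1, h2, h3, Real.cos_sub]
  have s1 := Real.sin_sq_add_cos_sq φ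
  have s2 := Real.sin_sq_add_cos_sq ψ
  linear_combination ‖a - c‖ ^ 2 * s1 + ‖b - c‖ ^ 2 * s2

lemma angle_bound {t : ℝ} (h : Real.cos t ≤ 1 / 2) : π / 3 ≤ |t| := by
  by_contra! hlt
  have := Real.cos_lt_cos_of_nonneg_of_le_pi (abs_nonneg t) (by linarith [Real.pi_pos]) hlt
  rw [Real.cos_abs, Real.cos_pi_div_three] at this
  linarith

lemma geom {V : Type*} (p : V → Pt) (u v : V) (N : Finset V) (hv : v ∈ N)
    (hpos : ∀ x ∈ N, 0 < dist (p u) (p x))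
    (hd : ∀ x ∈ N, ∀ y ∈ N, x ≠ y → dist (p u) (p y) ≤ dist (p x) (p y)) (hc : 6 ≤ N.card) :
    N.card = 6 ∧ ∃ a ∈ N, ∃ b ∈ N, a ≠ v ∧ b ≠ v ∧ a ≠ b ∧
      dist (p v) (p a) = dist (p u) (p a) ∧ dist (p v) (p b) = dist (p u) (p b) := by
  obtain ⟨α, -, -, hα0, hα1⟩ := polar (p v - p u) 0
  choose φ hφ1 hφ2 hφ3 hφ4 using fun x => polar (p x - p u) α
  have hcos : ∀ x ∈ N, ∀ y ∈ N, x ≠ y → ∀ s t, (p x - p u) 0 = ‖p x - p u‖ * Real.cos s →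
      (p x - p u) 1 = ‖p x - p u‖ * Real.sin s → (p y - p u) 0 = ‖p y - p u‖ * Real.cos t →
      (p y - p u) 1 = ‖p y - p u‖ * Real.sin t → Real.cos (s - t) ≤ 1 / 2 := by
    intro x hx y hy hne s t h0 h1 h2 h3
    have h := dist_polar h0 h1 h2 h3
    have d1 := hd x hx y hy hne
    have d2 := hd y hy x hx hne.symm
    rw [dist_comm (p y)] at d2
    have p1 := hpos x hx
    have p2 := hpos y hy
    by_contra! hlt
    have p3 := mul_pos p1 p2
    have p4 := mul_lt_mul_of_pos_left hlt p3
    rcases le_total (dist (p u) (p x)) (dist (p u) (p y)) with hl | hl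
    · nlinarith
    · nlinarith
  have hpi := Real.pi_pos
  have hb : ∀ x ∈ N, x ≠ v → π / 3 ≤ φ x - α ∧ φ x - α ≤ 5 * π / 3 := by
    intro x hx hne
    have h := hcos x hx v hv hne (φ x) α (hφ3 x) (hφ4 x) hα0 hα1
    have h1 := hφ1 x
    have h2 := hφ2 x
    constructor
    · have := angle_bound h
      rwa [abs_of_nonneg (by linarith)] at this
    · have h' : Real.cos (2 * π - (φ x - α)) ≤ 1 / 2 := by rwa [Real.cos_two_pi_sub]
      have := angle_bound h'
      rw [abs_of_nonneg (by linarith)] at this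
      linarith
  have hN : (N.erase v).card + 1 = N.card := Finset.card_erase_add_one hv
  have h3 : (0 : ℝ) < 3 / π := by positivity
  have hp3 : 3 / π * π = 3 := by field_simp
  obtain ⟨hcard, ⟨a, ha, ha1⟩, b, hbm, hb5⟩ := floor_lemma' (N.erase v) (fun x => 3 / π * (φ x - α))
    (fun x hx => by
      obtain ⟨hne, hx⟩ := Finset.mem_erase.mp hx
      have := mul_le_mul_of_nonneg_left (hb x hx hne).1 h3.le
      linarith)
    (fun x hx => by
      obtain ⟨hne, hx⟩ := Finset.mem_erase.mp hx
      have := mul_le_mul_of_nonneg_left (hb x hx hne).2 h3.le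
      linarith)
    (fun x hx y hy hne => by
      obtain ⟨_, hx⟩ := Finset.mem_erase.mp hx
      obtain ⟨_, hy⟩ := Finset.mem_erase.mp hy
      have h := angle_bound (hcos x hx y hy hne _ _ (hφ3 x) (hφ4 x) (hφ3 y) (hφ4 y))
      have e : 3 / π * (φ x - α) - 3 / π * (φ y - α) = 3 / π * (φ x - φ y) := by ring
      simp only [e]
      rw [abs_mul, abs_of_pos h3]
      have := mul_le_mul_of_nonneg_left h h3.le
      linarith) (by omega)
  have ha1' : φ a - α = π / 3 := by
    have : 3 / π * (φ a - α) = 1 := ha1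
    field_simp at this
    linarith
  have hb5' : φ b - α = 2 * π - π / 3 := by
    have : 3 / π * (φ b - α) = 5 := hb5
    field_simp at this
    linarith
  have heq : ∀ x ∈ N, x ≠ v → Real.cos (φ x - α) = 1 / 2 →
      dist (p v) (p x) = dist (p u) (p x) := by
    intro x hx hne hcx
    have h := dist_polar (hφ3 x) (hφ4 x) hα0 hα1
    rw [hcx] at h
    have d1 := hd x hx v hv hne
    have d2 := hd v hv x hx hne.symm
    have p1 := hpos x hx
    have p2 := hpos v hv
    rw [dist_comm (p x)] at h d1
    have e : dist (p u) (p x) = dist (p u) (p v) := by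
      apply le_antisymm
      · by_contra! hlt
        nlinarith
      · by_contra! hlt
        nlinarith
    rw [e] at h d2 ⊢
    nlinarith
  obtain ⟨hav, ha⟩ := Finset.mem_erase.mp ha
  obtain ⟨hbv, hbm⟩ := Finset.mem_erase.mp hbm
  refine ⟨by omega, a, ha, b, hbm, hav, hbv, ?_, heq a ha hav ?_, heq b hbm hbv ?_⟩
  · rintro rfl
    linarith
  · rw [ha1', Real.cos_pi_div_three]
  · rw [hb5', Real.cos_two_pi_sub, Real.cos_pi_div_three]

lemma exists_other {V : Type*} (N : Finset V) (a b c : V) (hc : 4 ≤ N.card) :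
    ∃ y ∈ N, y ≠ a ∧ y ≠ b ∧ y ≠ c := by
  have h3 : ({a, b, c} : Finset V).card ≤ 3 := Finset.card_le_three
  obtain ⟨y, hy, hy'⟩ := Finset.exists_mem_notMem_of_card_lt_card
    (show ({a, b, c} : Finset V).card < N.card by omega)
  simp only [Finset.mem_insert, Finset.mem_singleton, not_or] at hy'
  exact ⟨y, hy, hy'.1, hy'.2.1, hy'.2.2⟩

lemma mss_geom {V : Type*} [Fintype V] {G F : SimpleGraph V} {p : V → Pt}
    (hudg : IsUnitDiskGraph G p) (hF : IsMSS 2 p G F) {u v : V} (hv : F.Adj u v)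
    (hc : 6 ≤ F.degree u) :
    F.degree u = 6 ∧ ∃ a b, F.Adj u a ∧ F.Adj u b ∧ a ≠ v ∧ b ≠ v ∧ a ≠ b ∧
      dist (p v) (p a) = dist (p u) (p a) ∧ dist (p v) (p b) = dist (p u) (p b) := by
  rw [← SimpleGraph.card_neighborFinset_eq_degree] at hc ⊢
  obtain ⟨h, a, ha, b, hb, hrest⟩ := geom p u v (F.neighborFinset u) (by simpa using hv)
    (fun x hx => dist_pos.mpr (hudg.1.ne (SimpleGraph.Adj.ne (by simpa using hx))))
    (fun x hx y hy hne => by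
      obtain ⟨z, hz, hzx, hzy, -⟩ := exists_other (F.neighborFinset u) x y y (by omega)
      exact dist_ge hudg hF (by simpa using hx) (by simpa using hy)
        (by simpa using hz) hne hzx hzy) hc
  exact ⟨h, a, b, by simpa using ha, by simpa using hb, hrest⟩

/-- In a minimum-length 2-connected spanning subgraph `F` of a 2-connected unit disk
graph, if a vertex `u` has degree exactly 6 in `F`, then every neighbor of `u`
has degree at most 4 in `F`. -/
theorem mss2_neighbor_of_degree_six {V : Type*} [Fintype V] (G F : SimpleGraph V)
    (p : V → Pt) (hudg : IsUnitDiskGraph G p) (hG : KConnected 2 G)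
    (hF : IsMSS 2 p G F) (u : V) (hdeg : F.degree u = 6) :
    ∀ v, F.Adj u v → F.degree v ≤ 4 := by
  intro v hv
  by_contra! hlt
  obtain ⟨-, a, b, ha, hb, hav, hbv, hab, hda, hdb⟩ := mss_geom hudg hF hv hdeg.ge
  obtain ⟨y, hy, hyv, hya, hyb⟩ := exists_other (F.neighborFinset u) v a b (by
    rw [SimpleGraph.card_neighborFinset_eq_degree]; omega)
  have hy : F.Adj u y := by simpa using hy
  have m1 := exch_mss hudg hF hv ha hy hav.symm hyv hya hda
  have d1 := exch_degree hv.ne hav.symm (not_adj hudg hF hv ha hy hav.symm hyv hya)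
  have hv1 : (exch F u v a).Adj u v := exch_adj_of_ne hv hav.symm
  have hb1 : (exch F u v a).Adj u b := exch_adj_of_ne hb hab.symm
  have hy1 : (exch F u v a).Adj u y := exch_adj_of_ne hy hya
  have m2 := exch_mss hudg m1 hv1 hb1 hy1 hbv.symm hyv hyb hdb
  have d2 := exch_degree hv.ne hbv.symm (not_adj hudg m1 hv1 hb1 hy1 hbv.symm hyv hyb)
  have hv2 : (exch (exch F u v a) u v b).Adj v u := (exch_adj_of_ne hv1 hbv.symm).symm
  have := (mss_geom hudg m2 hv2 (by omega)).1
  omega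
end
end
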